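/- There is a first-order formula φ_BitR(x,z) over the language with binary relation symbols for < and ◁ and unary relation symbols for C and Q such that for every n ∈ ℕ and all a,b ∈ {0,...,n}, the finite prefix structure ({0,...,n}, <, ◁, C, Q) satisfies φ_BitR(a,b) iff bit r(b) of the binary representation of a is 1. -/

import Mathlib

open FirstOrder Language

/-- `q_i = i(i+1)/2`, the smallest element of column `i`. -/
def qseq (i : ℕ) : ℕ := i * (i + 1) / 2

/-- `c(x)`, the column number of `x`: the largest `i` with `q_i ≤ x`. -/
def col (x : ℕ) : ℕ := Nat.findGreatest (fun i => qseq i ≤ x) x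

/-- `q(x) = q_{c(x)}`, the bottom-most element of the column of `x`. -/
def qf (x : ℕ) : ℕ := qseq (col x)

/-- `r(x) = x - q(x)`, the row number of `x`. -/
def rowf (x : ℕ) : ℕ := x - qf x

/-- The row-major linear order `◁`. -/
def ordc (x y : ℕ) : Prop := rowf x < rowf y ∨ (rowf x = rowf y ∧ col x < col y)

/-- The unary predicate `C`: bit `r(x)` of `c(x)+1` is 1. -/
def Cpred (x : ℕ) : Prop := Nat.testBit (col x + 1) (rowf x) = true

/-- The unary predicate `Q`: bit `r(x)` of `q_{c(x)+1}` is 1. -/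
def Qpred (x : ℕ) : Prop := Nat.testBit (qseq (col x + 1)) (rowf x) = true

/-- Relation symbols of the language with binary `<`, `◁` and unary `C`, `Q`. -/
inductive Rel4 : ℕ → Type
  | lt : Rel4 2
  | ordc : Rel4 2
  | C : Rel4 1
  | Q : Rel4 1

/-- The language with binary relation symbols for `<` and `◁` and unary `C`, `Q`. -/
def L4 : Language := ⟨fun _ => Empty, Rel4⟩

/-- The finite prefix structure `({0,...,n}, <, ◁, C, Q)`. -/
def struct4 (n : ℕ) : L4.Structure (Fin (n + 1)) where
  funMap := fun f _ => f.elim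
  RelMap := fun r v =>
    match r with
    | .lt => (v 0 : ℕ) < (v 1 : ℕ)
    | .ordc => ordc (v 0 : ℕ) (v 1 : ℕ)
    | .C => Cpred (v 0 : ℕ)
    | .Q => Qpred (v 0 : ℕ)

/-!
Write `a = q(a) + r(a)`. Column `c(a) - 1` of `Q` lists the bits of `q(a)`, and column `r(a) - 1`
of `C` lists the bits of `r(a)`; both columns are complete in any prefix containing `a`. The bits
of the sum are first-order in those of the summands by carry lookahead, with elements standing for
their row numbers: the positions below `r(b)` are the rows of the elements below `b` in its column.

Columns and rows can be compared in terms of `<` and `◁`. An element `x > 1` starts a column iff it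
is `◁`-smaller than its predecessor. The order `◁` compares rows, except that `x ◁ y` may also hold
with `y` in the same row as `x` and in a later column. When `y` is in a later column, this case is
recognized by the absence of an element below `y` in its column that is `◁`-greater than `x`.
-/

section UniformDefinability

variable {L : Language} {ι : Type*} {M : ι → Type*} [∀ i, L.Structure (M i)] {α : Type*}

/-- Definability of a relation by one first-order formula, uniformly over a family of structures:
the relation is given by its interpretation `P i` in each structure `M i`, as a property of
assignments to the variables `α`. -/
def UniformlyDefinable (L : Language) {ι : Type*} (M : ι → Type*) [∀ i, L.Structure (M i)]
    {α : Type*} (P : ∀ i, (α → M i) → Prop) : Prop :=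
  ∃ φ : L.Formula α, ∀ i v, φ.Realize v ↔ P i v

namespace UniformlyDefinable

variable {P Q : ∀ i, (α → M i) → Prop}

theorem of_iff (e : ∀ i v, P i v ↔ Q i v) (hQ : UniformlyDefinable L M Q) :
    UniformlyDefinable L M P := by
  obtain ⟨φ, hφ⟩ := hQ
  exact ⟨φ, fun i v => (hφ i v).trans (e i v).symm⟩

protected theorem rel₁ (R : L.Relations 1) (x : α) :
    UniformlyDefinable L M fun _ v => Structure.RelMap R ![v x] :=
  ⟨R.formula₁ (.var x), fun _ _ => Formula.realize_rel₁⟩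

protected theorem rel₂ (R : L.Relations 2) (x y : α) :
    UniformlyDefinable L M fun _ v => Structure.RelMap R ![v x, v y] :=
  ⟨R.formula₂ (.var x) (.var y), fun _ _ => Formula.realize_rel₂⟩

protected theorem not (hP : UniformlyDefinable L M P) :
    UniformlyDefinable L M fun i v => ¬ P i v := by
  obtain ⟨φ, hφ⟩ := hP
  exact ⟨∼φ, fun i v => Formula.realize_not.trans (not_congr (hφ i v))⟩

protected theorem and (hP : UniformlyDefinable L M P) (hQ : UniformlyDefinable L M Q) :
    UniformlyDefinable L M fun i v => P i v ∧ Q i v := by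
  obtain ⟨φ, hφ⟩ := hP
  obtain ⟨ψ, hψ⟩ := hQ
  exact ⟨φ ⊓ ψ, fun i v => Formula.realize_inf.trans (and_congr (hφ i v) (hψ i v))⟩

protected theorem or (hP : UniformlyDefinable L M P) (hQ : UniformlyDefinable L M Q) :
    UniformlyDefinable L M fun i v => P i v ∨ Q i v := by
  obtain ⟨φ, hφ⟩ := hP
  obtain ⟨ψ, hψ⟩ := hQ
  exact ⟨φ ⊔ ψ, fun i v => Formula.realize_sup.trans (or_congr (hφ i v) (hψ i v))⟩

protected theorem imp (hP : UniformlyDefinable L M P) (hQ : UniformlyDefinable L M Q) :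
    UniformlyDefinable L M fun i v => P i v → Q i v := by
  obtain ⟨φ, hφ⟩ := hP
  obtain ⟨ψ, hψ⟩ := hQ
  exact ⟨φ.imp ψ, fun i v => Formula.realize_imp.trans (imp_congr (hφ i v) (hψ i v))⟩

protected theorem xor (hP : UniformlyDefinable L M P) (hQ : UniformlyDefinable L M Q) :
    UniformlyDefinable L M fun i v => Xor (P i v) (Q i v) :=
  (hP.and hQ.not).or (hQ.and hP.not)

end UniformlyDefinable

protected theorem UniformlyDefinable.exists {P : ∀ i, (α → M i) → M i → Prop}
    (hP : UniformlyDefinable L M fun i (v : Option α → M i) =>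
      P i (fun a => v (some a)) (v none)) :
    UniformlyDefinable L M fun i v => ∃ x, P i v x := by
  obtain ⟨φ, hφ⟩ := hP
  let bind : Option α → α ⊕ Unit := fun o => o.elim (.inr ()) .inl
  refine ⟨(φ.relabel bind).iExs Unit, fun i v => Formula.realize_iExs.trans ?_⟩
  simp only [Formula.realize_relabel, hφ]
  exact ⟨fun ⟨x, hx⟩ => ⟨x (), hx⟩, fun ⟨x, hx⟩ => ⟨fun _ => x, hx⟩⟩

protected theorem UniformlyDefinable.forall {P : ∀ i, (α → M i) → M i → Prop}
    (hP : UniformlyDefinable L M fun i (v : Option α → M i) =>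
      P i (fun a => v (some a)) (v none)) :
    UniformlyDefinable L M fun i v => ∀ x, P i v x :=
  .of_iff (fun _ _ => not_exists_not.symm) (.not (.exists (P := fun i v x => ¬ P i v x) hP.not))

end UniformDefinability

section Coordinates

theorem qseq_succ (i : ℕ) : qseq (i + 1) = qseq i + (i + 1) := by
  simpa [qseq, mul_comm] using Nat.triangle_succ (i + 1)

theorem qseq_strictMono : StrictMono qseq :=
  strictMono_nat_of_lt_succ fun i => by rw [qseq_succ]; omega

theorem qseq_col_le (x : ℕ) : qseq (col x) ≤ x :=
  Nat.findGreatest_spec (P := fun i => qseq i ≤ x) (Nat.zero_le x) (Nat.zero_le x)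

theorem lt_qseq_col_succ (x : ℕ) : x < qseq (col x + 1) := by
  by_contra! h
  exact (Nat.le_findGreatest (P := fun i => qseq i ≤ x) (qseq_strictMono.le_apply.trans h) h).not_gt
    (Nat.lt_succ_self _)

theorem qseq_col_add_rowf (x : ℕ) : qseq (col x) + rowf x = x :=
  Nat.add_sub_of_le (qseq_col_le x)

theorem rowf_le_col (x : ℕ) : rowf x ≤ col x := by
  have hlt := lt_qseq_col_succ x
  have hx := qseq_col_add_rowf x
  rw [qseq_succ] at hlt
  omega

theorem col_qseq_add {c r : ℕ} (h : r ≤ c) : col (qseq c + r) = c := by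
  have hle := qseq_col_le (qseq c + r)
  have hlt := lt_qseq_col_succ (qseq c + r)
  have h₁ : col (qseq c + r) < c + 1 := qseq_strictMono.lt_iff_lt.1 (by rw [qseq_succ]; omega)
  have h₂ : c < col (qseq c + r) + 1 := qseq_strictMono.lt_iff_lt.1 (by omega)
  omega

theorem rowf_qseq_add {c r : ℕ} (h : r ≤ c) : rowf (qseq c + r) = r := by
  rw [rowf, qf, col_qseq_add h, Nat.add_sub_cancel_left]

theorem lt_of_col_lt_col {x y : ℕ} (h : col x < col y) : x < y :=
  (lt_qseq_col_succ x).trans_le ((qseq_strictMono.monotone h).trans (qseq_col_le y))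

theorem lt_iff_col_rowf {x y : ℕ} :
    x < y ↔ col x < col y ∨ col x = col y ∧ rowf x < rowf y := by
  have hx := qseq_col_add_rowf x
  have hy := qseq_col_add_rowf y
  rcases lt_trichotomy (col x) (col y) with h | h | h
  · simp [h, lt_of_col_lt_col h]
  · rw [h] at hx
    omega
  · have := lt_of_col_lt_col h
    omega

theorem rowf_succ_eq_zero_iff (p : ℕ) : rowf (p + 1) = 0 ↔ p = 0 ∨ ordc (p + 1) p := by
  have hp := qseq_col_add_rowf p
  unfold ordc
  rcases (rowf_le_col p).lt_or_eq with hlt | htop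
  · have hsucc : p + 1 = qseq (col p) + (rowf p + 1) := by omega
    have hcol : col (p + 1) = col p := hsucc ▸ col_qseq_add hlt
    have hrow : rowf (p + 1) = rowf p + 1 := hsucc ▸ rowf_qseq_add hlt
    have hp₀ : p ≠ 0 := by
      rintro rfl
      exact hlt.ne rfl
    omega
  · have hsucc : p + 1 = qseq (col p + 1) + 0 := by rw [qseq_succ]; omega
    have hrow : rowf (p + 1) = 0 := hsucc ▸ rowf_qseq_add (Nat.zero_le _)
    have hp₀ : col p = 0 → p = 0 := by
      intro h
      rw [htop, h] at hp
      exact hp.symm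
    omega

end Coordinates

section Prefix

variable {n : ℕ}

theorem exists_fin_col_eq_rowf_eq (y : Fin (n + 1)) {c r : ℕ} (hr : r ≤ c)
    (hy : c < col y ∨ c = col y ∧ r ≤ rowf y) : ∃ z : Fin (n + 1), col z = c ∧ rowf z = r := by
  have hcol := col_qseq_add hr
  have hrow := rowf_qseq_add hr
  have hle : ¬ (y : ℕ) < qseq c + r := by rw [lt_iff_col_rowf]; omega
  exact ⟨⟨qseq c + r, by omega⟩, hcol, hrow⟩

theorem exists_fin_rowf_eq (y : Fin (n + 1)) {r : ℕ} (hr : r ≤ rowf y) :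
    ∃ z : Fin (n + 1), rowf z = r :=
  (exists_fin_col_eq_rowf_eq y (hr.trans (rowf_le_col y)) (.inr ⟨rfl, hr⟩)).imp fun _ => And.right

theorem rowf_eq_zero_iff (x : Fin (n + 1)) :
    rowf x = 0 ↔ ∀ p : Fin (n + 1), p ⋖ x → p = 0 ∨ ordc x p := by
  have key (p : Fin (n + 1)) (hp : p ⋖ x) : rowf x = 0 ↔ p = 0 ∨ ordc x p := by
    rw [← Nat.covBy_iff_add_one_eq.1 (Fin.covBy_iff.1 hp), rowf_succ_eq_zero_iff,
      Fin.val_eq_zero_iff]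
  refine ⟨fun hx p hp => (key p hp).1 hx, fun h => ?_⟩
  rcases eq_or_ne x 0 with rfl | hx
  · exact Nat.zero_sub _
  · have hx' : (x : ℕ) ≠ 0 := Fin.val_ne_zero_iff.2 hx
    let p : Fin (n + 1) := ⟨x - 1, by omega⟩
    have hp : p ⋖ x := Fin.covBy_iff.2 (Nat.covBy_iff_add_one_eq.2 (Nat.sub_one_add_one hx'))
    exact (key p hp).2 (h p hp)

theorem fin_lt_iff_col_rowf {x y : Fin (n + 1)} :
    x < y ↔ col x < col y ∨ col x = col y ∧ rowf x < rowf y :=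
  lt_iff_col_rowf

theorem col_lt_col_iff (x y : Fin (n + 1)) :
    col x < col y ↔ ∃ w : Fin (n + 1), rowf w = 0 ∧ x < w ∧ w ≤ y := by
  simp only [← not_lt (α := Fin (n + 1)), fin_lt_iff_col_rowf]
  constructor
  · intro h
    obtain ⟨w, hcol, hrow⟩ := exists_fin_col_eq_rowf_eq y (Nat.zero_le (col y)) (by omega)
    exact ⟨w, by omega⟩
  · rintro ⟨w, hw⟩
    omega

theorem rowf_lt_rowf_iff (x y : Fin (n + 1)) :
    rowf x < rowf y ↔ ordc x y ∧
      (col x < col y → ∃ w : Fin (n + 1), col w = col y ∧ w < y ∧ ordc x w) := by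
  simp only [ordc, fin_lt_iff_col_rowf]
  have := rowf_le_col y
  constructor
  · refine fun h => ⟨.inl h, fun hcol => ?_⟩
    obtain ⟨w, hw⟩ := exists_fin_col_eq_rowf_eq y (c := col y) (r := rowf y - 1)
      (by omega) (by omega)
    exact ⟨w, by omega⟩
  · rintro ⟨hxy, hw⟩
    by_contra! hle
    obtain ⟨w, hw⟩ := hw (by omega)
    omega

theorem col_succ_eq_col_iff (x y : Fin (n + 1)) :
    col x + 1 = col y ↔
      col x < col y ∧ ¬ ∃ w : Fin (n + 1), col x < col w ∧ col w < col y := by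
  constructor
  · refine fun h => ⟨by omega, ?_⟩
    rintro ⟨w, hw⟩
    omega
  · rintro ⟨hlt, hbetween⟩
    by_contra hne
    obtain ⟨w, hw⟩ := exists_fin_col_eq_rowf_eq y (c := col x + 1) (Nat.zero_le _) (by omega)
    exact hbetween ⟨w, by omega⟩

-- A row meets every column from its diagonal element on, so the diagonal element is the one
-- with no element of its row in an earlier column.
theorem rowf_eq_col_iff (x : Fin (n + 1)) :
    rowf x = col x ↔ ∀ w : Fin (n + 1), col w < col x → ¬ rowf w = rowf x := by
  have hx := rowf_le_col x
  constructor
  · intro h w hw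
    have := rowf_le_col w
    omega
  · intro h
    by_contra hne
    obtain ⟨w, hcol, hrow⟩ := exists_fin_col_eq_rowf_eq x (c := col x - 1) (r := rowf x)
      (by omega) (by omega)
    exact h w (by omega) hrow

theorem col_succ_eq_rowf_iff (x y : Fin (n + 1)) :
    col x + 1 = rowf y ↔
      ∃ d : Fin (n + 1), rowf d = col d ∧ rowf d = rowf y ∧ col x + 1 = col d := by
  constructor
  · intro h
    have := rowf_le_col y
    obtain ⟨d, hd⟩ := exists_fin_col_eq_rowf_eq y (le_refl (rowf y)) (by omega)
    exact ⟨d, by omega⟩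
  · rintro ⟨d, hd⟩
    omega

theorem qseq_lt_two_pow (i : ℕ) : qseq i < 2 ^ i := by
  induction i with
  | zero => simp [qseq]
  | succ i ih =>
    have : i < 2 ^ i := Nat.lt_two_pow_self
    rw [qseq_succ, pow_succ]
    omega

-- The bits of `f m` fit into column `m - 1`, which is complete in the prefix since `m ≤ col a`.
theorem testBit_iff_exists_col_succ_eq {f : ℕ → ℕ} {m : ℕ} (hf : f m < 2 ^ m) (a : Fin (n + 1))
    (hm : m ≤ col a) (k : ℕ) :
    (f m).testBit k ↔
      ∃ y : Fin (n + 1), col y + 1 = m ∧ rowf y = k ∧ (f (col y + 1)).testBit (rowf y) := by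
  constructor
  · intro hbit
    have hk : k < m :=
      (Nat.pow_lt_pow_iff_right one_lt_two).1 ((Nat.ge_two_pow_of_testBit hbit).trans_lt hf)
    obtain ⟨y, hcol, hrow⟩ := exists_fin_col_eq_rowf_eq a (c := m - 1) (r := k)
      (by omega) (by omega)
    have hcol' : col y + 1 = m := by omega
    exact ⟨y, hcol', hrow, by rwa [hcol', hrow]⟩
  · rintro ⟨y, rfl, rfl, hbit⟩
    exact hbit

theorem testBit_qseq_col_iff (a : Fin (n + 1)) (k : ℕ) :
    (qseq (col a)).testBit k ↔
      ∃ y : Fin (n + 1), col y + 1 = col a ∧ rowf y = k ∧ Qpred y :=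
  testBit_iff_exists_col_succ_eq (qseq_lt_two_pow _) a le_rfl k

theorem testBit_rowf_iff (a : Fin (n + 1)) (k : ℕ) :
    (rowf a).testBit k ↔
      ∃ y : Fin (n + 1), col y + 1 = rowf a ∧ rowf y = k ∧ Cpred y :=
  testBit_iff_exists_col_succ_eq (f := id) Nat.lt_two_pow_self a (rowf_le_col a) k

end Prefix

section Carry

/-- The carry-lookahead condition for a carry into position `k` in the addition of two numbers
with bit sequences `a` and `b`: some position below `k` generates a carry and all positions
between it and `k` propagate it. -/
def CarryInto (a b : ℕ → Bool) (k : ℕ) : Prop :=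
  ∃ j < k, (a j ∧ b j) ∧ ∀ i < k, j < i → a i ∨ b i

theorem carryInto_succ_iff {a b : ℕ → Bool} {k : ℕ} :
    CarryInto a b (k + 1) ↔ a k ∧ b k ∨ (a k ∨ b k) ∧ CarryInto a b k := by
  constructor
  · rintro ⟨j, hj, hgen, hprop⟩
    rcases Nat.lt_succ_iff_lt_or_eq.1 hj with hj | rfl
    · exact .inr ⟨hprop k k.lt_succ_self hj, j, hj, hgen, fun i hi => hprop i (by omega)⟩
    · exact .inl hgen
  · rintro (hgen | ⟨hk, j, hj, hgen, hprop⟩)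
    · exact ⟨k, k.lt_succ_self, hgen, fun i hi hki => by omega⟩
    · refine ⟨j, by omega, hgen, fun i hi hji => ?_⟩
      rcases Nat.lt_succ_iff_lt_or_eq.1 hi with hi | rfl
      · exact hprop i hi hji
      · exact hk

theorem carryInto_congr {a a' b b' : ℕ → Bool} {k : ℕ} (ha : ∀ i < k, a i = a' i)
    (hb : ∀ i < k, b i = b' i) : CarryInto a b k ↔ CarryInto a' b' k := by
  refine exists_congr fun j => and_congr_right fun hj => ?_
  rw [ha j hj, hb j hj]
  refine and_congr_right' (forall₂_congr fun i hi => ?_)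
  rw [ha i hi, hb i hi]

theorem bitVec_carry_iff_carryInto {w : ℕ} (x y : BitVec w) (k : ℕ) :
    BitVec.carry k x y false ↔ CarryInto x.getLsbD y.getLsbD k := by
  induction k with
  | zero => simp [CarryInto]
  | succ k ih =>
    rw [carryInto_succ_iff, ← ih, BitVec.carry_succ, Bool.atLeastTwo]
    cases x.getLsbD k <;> cases y.getLsbD k <;> simp

theorem testBit_add_iff (x y k : ℕ) :
    (x + y).testBit k ↔
      Xor (Xor (x.testBit k) (y.testBit k)) (CarryInto x.testBit y.testBit k) := by
  have hbit (z : ℕ) {i : ℕ} (hi : i < k + 1) :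
      (BitVec.ofNat (k + 1) z).getLsbD i = z.testBit i := by
    simp only [BitVec.getLsbD_ofNat, hi, decide_true, Bool.true_and]
  have hcarry : BitVec.carry k (.ofNat (k + 1) x) (.ofNat (k + 1) y) false ↔
      CarryInto x.testBit y.testBit k :=
    (bitVec_carry_iff_carryInto _ _ k).trans
      (carryInto_congr (fun i hi => hbit x (by omega)) fun i hi => hbit y (by omega))
  have hk := k.lt_succ_self
  rw [← hcarry, ← hbit _ hk, BitVec.ofNat_add, BitVec.getLsbD_add hk, hbit _ hk, hbit _ hk]
  rw [← Bool.xor_assoc, Bool.coe_xor_iff, Bool.coe_xor_iff]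

theorem carryInto_rowf_iff {n : ℕ} (a b : ℕ → Bool) (z : Fin (n + 1)) :
    CarryInto a b (rowf z) ↔
      ∃ j : Fin (n + 1), rowf j < rowf z ∧ (a (rowf j) ∧ b (rowf j)) ∧
        ∀ i : Fin (n + 1), rowf i < rowf z → rowf j < rowf i → a (rowf i) ∨ b (rowf i) := by
  constructor
  · rintro ⟨j, hj, hgen, hprop⟩
    obtain ⟨j, rfl⟩ := exists_fin_rowf_eq z hj.le
    exact ⟨j, hj, hgen, fun i => hprop _⟩
  · rintro ⟨j, hj, hgen, hprop⟩
    refine ⟨rowf j, hj, hgen, fun i hi => ?_⟩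
    obtain ⟨i, rfl⟩ := exists_fin_rowf_eq z hi.le
    exact hprop i hi

end Carry

section PrefixDefinability

attribute [local instance] struct4

/-- `FO(<, ◁, C, Q)`-definability: `P n` is defined in every prefix structure
`({0,...,n}, <, ◁, C, Q)` by the same formula. -/
abbrev PrefixDefinable {α : Type*} (P : ∀ n : ℕ, (α → Fin (n + 1)) → Prop) : Prop :=
  UniformlyDefinable L4 (fun n => Fin (n + 1)) P

variable {α : Type*} (x y : α)

theorem prefixDefinable_lt : PrefixDefinable fun _ v => v x < v y :=
  .rel₂ (L := L4) Rel4.lt x y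

theorem prefixDefinable_ordc : PrefixDefinable fun _ v => ordc (v x) (v y) :=
  .rel₂ (L := L4) Rel4.ordc x y

theorem prefixDefinable_cpred : PrefixDefinable fun _ v => Cpred (v x) :=
  .rel₁ (L := L4) Rel4.C x

theorem prefixDefinable_qpred : PrefixDefinable fun _ v => Qpred (v x) :=
  .rel₁ (L := L4) Rel4.Q x

theorem prefixDefinable_le : PrefixDefinable fun _ v => v x ≤ v y :=
  .of_iff (fun _ _ => not_lt.symm) (.not (prefixDefinable_lt _ _))

theorem prefixDefinable_covBy : PrefixDefinable fun _ v => v x ⋖ v y :=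
  .and (prefixDefinable_lt _ _)
    (.forall (.imp (prefixDefinable_lt _ _) (.not (prefixDefinable_lt _ _))))

theorem prefixDefinable_eq_zero : PrefixDefinable fun _ v => v x = 0 :=
  .of_iff (fun _ _ => isMin_iff_eq_bot.symm.trans isMin_iff_forall_not_lt)
    (.forall (.not (prefixDefinable_lt _ _)))

theorem prefixDefinable_rowf_eq_zero : PrefixDefinable fun _ v => rowf (v x) = 0 :=
  .of_iff (fun _ v => rowf_eq_zero_iff (v x))
    (.forall (.imp (prefixDefinable_covBy _ _)
      (.or (prefixDefinable_eq_zero _) (prefixDefinable_ordc _ _))))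

theorem prefixDefinable_col_lt_col : PrefixDefinable fun _ v => col (v x) < col (v y) :=
  .of_iff (fun _ v => col_lt_col_iff (v x) (v y))
    (.exists (.and (prefixDefinable_rowf_eq_zero _)
      (.and (prefixDefinable_lt _ _) (prefixDefinable_le _ _))))

theorem prefixDefinable_col_eq_col : PrefixDefinable fun _ v => col (v x) = col (v y) :=
  .of_iff (fun _ _ => by rw [← not_or, ← ne_iff_lt_or_gt, not_ne_iff])
    (.and (.not (prefixDefinable_col_lt_col x y)) (.not (prefixDefinable_col_lt_col y x)))

theorem prefixDefinable_rowf_lt_rowf : PrefixDefinable fun _ v => rowf (v x) < rowf (v y) :=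
  .of_iff (fun _ v => rowf_lt_rowf_iff (v x) (v y))
    (.and (prefixDefinable_ordc _ _) (.imp (prefixDefinable_col_lt_col _ _)
      (.exists (.and (prefixDefinable_col_eq_col _ _)
        (.and (prefixDefinable_lt _ _) (prefixDefinable_ordc _ _))))))

theorem prefixDefinable_rowf_eq_rowf : PrefixDefinable fun _ v => rowf (v x) = rowf (v y) :=
  .of_iff (fun _ _ => by rw [← not_or, ← ne_iff_lt_or_gt, not_ne_iff])
    (.and (.not (prefixDefinable_rowf_lt_rowf x y)) (.not (prefixDefinable_rowf_lt_rowf y x)))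

theorem prefixDefinable_col_succ_eq_col :
    PrefixDefinable fun _ v => col (v x) + 1 = col (v y) :=
  .of_iff (fun _ v => col_succ_eq_col_iff (v x) (v y))
    (.and (prefixDefinable_col_lt_col _ _)
      (.not (.exists (.and (prefixDefinable_col_lt_col _ _) (prefixDefinable_col_lt_col _ _)))))

theorem prefixDefinable_rowf_eq_col : PrefixDefinable fun _ v => rowf (v x) = col (v x) :=
  .of_iff (fun _ v => rowf_eq_col_iff (v x))
    (.forall (.imp (prefixDefinable_col_lt_col _ _) (.not (prefixDefinable_rowf_eq_rowf _ _))))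

theorem prefixDefinable_col_succ_eq_rowf :
    PrefixDefinable fun _ v => col (v x) + 1 = rowf (v y) :=
  .of_iff (fun _ v => col_succ_eq_rowf_iff (v x) (v y))
    (.exists (.and (prefixDefinable_rowf_eq_col _)
      (.and (prefixDefinable_rowf_eq_rowf _ _) (prefixDefinable_col_succ_eq_col _ _))))

theorem prefixDefinable_testBit_qseq_col :
    PrefixDefinable fun _ v => (qseq (col (v x))).testBit (rowf (v y)) :=
  .of_iff (fun _ v => testBit_qseq_col_iff (v x) (rowf (v y)))
    (.exists (.and (prefixDefinable_col_succ_eq_col _ _)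
      (.and (prefixDefinable_rowf_eq_rowf _ _) (prefixDefinable_qpred _))))

theorem prefixDefinable_testBit_rowf :
    PrefixDefinable fun _ v => (rowf (v x)).testBit (rowf (v y)) :=
  .of_iff (fun _ v => testBit_rowf_iff (v x) (rowf (v y)))
    (.exists (.and (prefixDefinable_col_succ_eq_rowf _ _)
      (.and (prefixDefinable_rowf_eq_rowf _ _) (prefixDefinable_cpred _))))

theorem prefixDefinable_carryInto : PrefixDefinable fun _ v =>
    CarryInto (qseq (col (v x))).testBit (rowf (v x)).testBit (rowf (v y)) :=
  .of_iff (fun _ v => carryInto_rowf_iff _ _ (v y))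
    (.exists (.and (prefixDefinable_rowf_lt_rowf _ _)
      (.and (.and (prefixDefinable_testBit_qseq_col _ _) (prefixDefinable_testBit_rowf _ _))
        (.forall (.imp (prefixDefinable_rowf_lt_rowf _ _)
          (.imp (prefixDefinable_rowf_lt_rowf _ _)
            (.or (prefixDefinable_testBit_qseq_col _ _) (prefixDefinable_testBit_rowf _ _))))))))

theorem prefixDefinable_testBit :
    PrefixDefinable fun _ v => (v x : ℕ).testBit (rowf (v y)) :=
  .of_iff (fun _ v => by rw [← testBit_add_iff, qseq_col_add_rowf])
    (.xor (.xor (prefixDefinable_testBit_qseq_col x y) (prefixDefinable_testBit_rowf x y))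
      (prefixDefinable_carryInto x y))

end PrefixDefinability

/-- Lemma 3.5: there is an FO(<,◁,C,Q)-formula `φBitR(x,z)`
expressing that bit `r(z)` of the binary representation of `x` is 1. -/
theorem lt_ordc_C_Q_define_bitR :
    ∃ φBitR : L4.Formula (Fin 2),
      ∀ n : ℕ,
        letI := struct4 n
        ∀ a b : Fin (n + 1),
          φBitR.Realize ![a, b] ↔ Nat.testBit (a : ℕ) (rowf (b : ℕ)) = true := by
  obtain ⟨φ, hφ⟩ := prefixDefinable_testBit (0 : Fin 2) 1
  exact ⟨φ, fun n a b => hφ n ![a, b]⟩
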